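/- Let q ≥ 2 be an integer, let R' be a real number with 0 < R' < 1, and suppose K_q(R') := 1 − (q/(q−1))·(1−R') > 0. Set τ := ((q−1)/q)·(1 − √(K_q(R'))). Then for every real s > 0, setting μ₁(s) := (R' + √(R'² + 4R'/s))/2 and γ(s) := ((q−1)/q)·(1 − √(1 − (q/(q−1))·(1 − μ₁(s)))), one has γ(s) ≥ τ − 1/(2s·√(K_q(R'))). -/

import Mathlib

/-!
Since `K_q` is affine in the rate with slope `q / (q - 1)`, the Johnson radius is a convex function
of the rate, with slope `-1 / (2 √(K_q(R)))` at `R`, so its graph lies above its tangent line at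
`R`. The decoder of multiplicity `s` reaches the Johnson radius at the rate `μ₁(s)`, and
`R ≤ μ₁(s) ≤ R + 1 / s`.
-/

open Real

/-- The quantity `K_q(R) = 1 - (q / (q - 1)) (1 - R)` whose square root enters the `q`-ary Johnson
radius at rate `R`. The alphabet size `q` is allowed to be any real number. -/
noncomputable def johnsonDiscriminant (q R : ℝ) : ℝ :=
  1 - q / (q - 1) * (1 - R)

/-- The `q`-ary Johnson radius `((q - 1) / q) (1 - √(K_q(R)))` at rate `R`. The limit radius `τ` is
its value at the pseudo-rate, and the achievable radius `γ(s)` its value at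
`effectiveRate R s`. -/
noncomputable def johnsonRadius (q R : ℝ) : ℝ :=
  (q - 1) / q * (1 - √(johnsonDiscriminant q R))

/-- The rate `μ₁(s)` whose Johnson radius is the correction radius `γ(s)` of list decoding with
multiplicity `s` at pseudo-rate `R`. It is the nonnegative root of `μ ^ 2 - R μ - R / s` when
`0 < R` and `0 < s`. The multiplicity is allowed to be any real number. -/
noncomputable def effectiveRate (R s : ℝ) : ℝ :=
  (R + √(R ^ 2 + 4 * R / s)) / 2

theorem sqrt_add_le_sqrt_add_div {x y : ℝ} (hx : 0 < x) (hxy : 0 ≤ x + y) :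
    √(x + y) ≤ √x + y / (2 * √x) := by
  have hratio : -1 ≤ y / x := by
    rw [le_div_iff₀ hx]
    linarith
  calc √(x + y) = √x * √(1 + y / x) := by
        rw [← sqrt_mul hx.le, mul_add, mul_one, mul_div_cancel₀ y hx.ne']
    _ ≤ √x * (1 + y / x / 2) := by
        gcongr
        exact sqrt_one_add_le hratio
    _ = √x + y / (2 * √x) := by
        have hsqrt : √x ≠ 0 := (sqrt_pos.mpr hx).ne'
        field_simp
        rw [sq_sqrt hx.le]

section EffectiveRate

variable {R s : ℝ}

theorem le_effectiveRate (hR : 0 ≤ R) (hs : 0 < s) : R ≤ effectiveRate R s := by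
  have hsqrt : R ≤ √(R ^ 2 + 4 * R / s) :=
    le_sqrt_of_sq_le (le_add_of_nonneg_right (by positivity))
  unfold effectiveRate
  linarith

theorem effectiveRate_le_add_inv (hR : 0 < R) (hs : 0 < s) : effectiveRate R s ≤ R + s⁻¹ := by
  have hsqrt : √(R ^ 2 + 4 * R / s) ≤ R + 2 * s⁻¹ :=
    calc √(R ^ 2 + 4 * R / s) ≤ √(R ^ 2) + 4 * R / s / (2 * √(R ^ 2)) :=
          sqrt_add_le_sqrt_add_div (by positivity) (by positivity)
      _ = R + 2 * s⁻¹ := by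
          rw [sqrt_sq hR.le]
          field_simp
          ring
  unfold effectiveRate
  linarith

end EffectiveRate

section JohnsonRadius

variable {q R R' : ℝ}

theorem johnsonDiscriminant_eq_add (q R R' : ℝ) :
    johnsonDiscriminant q R' = johnsonDiscriminant q R + q / (q - 1) * (R' - R) := by
  unfold johnsonDiscriminant
  ring

theorem johnsonDiscriminant_monotone (hq : 1 < q) : Monotone (johnsonDiscriminant q) := by
  intro R R' hRR'
  have hslope : 0 ≤ q / (q - 1) := div_nonneg (by linarith) (by linarith)
  rw [johnsonDiscriminant_eq_add q R R']
  exact le_add_of_nonneg_right (mul_nonneg hslope (sub_nonneg.mpr hRR'))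

theorem johnsonDiscriminant_pos_iff (hq : 1 < q) : 0 < johnsonDiscriminant q R ↔ q⁻¹ < R := by
  have hq0 : 0 < q := by linarith
  have hq1 : 0 < q - 1 := sub_pos.mpr hq
  have hfactor : johnsonDiscriminant q R = q / (q - 1) * (R - q⁻¹) := by
    unfold johnsonDiscriminant
    field_simp
    ring
  rw [hfactor, mul_pos_iff_of_pos_left (div_pos hq0 hq1), sub_pos]

theorem johnsonRadius_tangent_le (hq : 1 < q) (hR : 0 < johnsonDiscriminant q R)
    (hR' : 0 ≤ johnsonDiscriminant q R') :
    johnsonRadius q R - (R' - R) / (2 * √(johnsonDiscriminant q R)) ≤ johnsonRadius q R' := by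
  have hq0 : 0 < q := by linarith
  have hq1 : 0 < q - 1 := sub_pos.mpr hq
  rw [johnsonDiscriminant_eq_add q R R'] at hR'
  calc johnsonRadius q R - (R' - R) / (2 * √(johnsonDiscriminant q R))
      = (q - 1) / q * (1 - (√(johnsonDiscriminant q R) +
          q / (q - 1) * (R' - R) / (2 * √(johnsonDiscriminant q R)))) := by
        have hsqrt : √(johnsonDiscriminant q R) ≠ 0 := (sqrt_pos.mpr hR).ne'
        unfold johnsonRadius
        field_simp
        ring
    _ ≤ (q - 1) / q * (1 - √(johnsonDiscriminant q R + q / (q - 1) * (R' - R))) := by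
        gcongr
        exact sqrt_add_le_sqrt_add_div hR hR'
    _ = johnsonRadius q R' := by
        rw [johnsonRadius, johnsonDiscriminant_eq_add q R R']

end JohnsonRadius

theorem radius_dependency_on_multiplicity_general {q R s : ℝ} (hq : 1 < q)
    (hK : 0 < johnsonDiscriminant q R) (hs : 0 < s) :
    johnsonRadius q R - 1 / (2 * s * √(johnsonDiscriminant q R)) ≤
      johnsonRadius q (effectiveRate R s) := by
  have hR : 0 < R := (inv_pos.mpr (by linarith)).trans ((johnsonDiscriminant_pos_iff hq).mp hK)
  have hK_le : johnsonDiscriminant q R ≤ johnsonDiscriminant q (effectiveRate R s) :=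
    johnsonDiscriminant_monotone hq (le_effectiveRate hR.le hs)
  have hrate : effectiveRate R s - R ≤ s⁻¹ :=
    sub_le_iff_le_add'.mpr (effectiveRate_le_add_inv hR hs)
  calc johnsonRadius q R - 1 / (2 * s * √(johnsonDiscriminant q R))
      = johnsonRadius q R - s⁻¹ / (2 * √(johnsonDiscriminant q R)) := by
        field_simp
    _ ≤ johnsonRadius q R - (effectiveRate R s - R) / (2 * √(johnsonDiscriminant q R)) := by
        gcongr
    _ ≤ johnsonRadius q (effectiveRate R s) :=
        johnsonRadius_tangent_le hq hK (hK.le.trans hK_le)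

/-- Dependency of the achievable correction radius `γ(s)` on the multiplicity `s`:
`γ(s) ≥ τ - 1/(2s√(K_q(R')))`, where `K_q(R') = 1 - (q/(q-1))(1-R')` and
`τ = ((q-1)/q)(1 - √(K_q(R')))`. -/
theorem radius_dependency_on_multiplicity (q : ℕ) (hq : 2 ≤ q)
    (R' : ℝ) (hR0 : 0 < R') (hR1 : R' < 1)
    (K : ℝ) (hK : K = 1 - (q : ℝ) / ((q : ℝ) - 1) * (1 - R')) (hKpos : 0 < K)
    (τ : ℝ) (hτ : τ = ((q : ℝ) - 1) / q * (1 - Real.sqrt K)) :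
    ∀ s : ℝ, 0 < s →
      ((q : ℝ) - 1) / q *
          (1 - Real.sqrt (1 - (q : ℝ) / ((q : ℝ) - 1) *
            (1 - (R' + Real.sqrt (R' ^ 2 + 4 * R' / s)) / 2))) ≥
        τ - 1 / (2 * s * Real.sqrt K) := by
  subst hK hτ
  exact fun s hs => radius_dependency_on_multiplicity_general (Nat.one_lt_cast.mpr hq) hKpos hs
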